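/- arXiv:1909.12459 — 2 statements merged into one kernel-verified Lean document; each statement's English description precedes it below -/
import Mathlib

section
/- The matrix-completion objective f has a Nash equilibrium: there exist U₀ ∈ ℝ^{m×r} and V₀ ∈ ℝ^{r×n} such that f(U₀,V₀) ≤ f(U,V₀) for every U ∈ ℝ^{m×r} and f(U₀,V₀) ≤ f(U₀,V) for every V ∈ ℝ^{r×n}. -/
open Finset Matrix

/-- Squared Frobenius norm: `frobSq X = ‖X‖_F²`. -/
noncomputable def frobSq {a b : ℕ} (X : Matrix (Fin a) (Fin b) ℝ) : ℝ :=
  ∑ i, ∑ j, (X i j) ^ 2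

/-- The matrix-completion objective
`f(U,V) = (1/2)(‖U‖_F² + ‖V‖_F²) + (μ/2) ∑_{(i,j)∈Ω} ((UV − M)_{ij})² + (ν/2) ‖L(UV) − b‖²`. -/
noncomputable def objF {m n r p : ℕ} (Ω : Finset (Fin m × Fin n)) (M : Matrix (Fin m) (Fin n) ℝ)
    (L : Matrix (Fin m) (Fin n) ℝ →ₗ[ℝ] EuclideanSpace ℝ (Fin p))
    (b : EuclideanSpace ℝ (Fin p)) (μ ν : ℝ)
    (U : Matrix (Fin m) (Fin r) ℝ) (V : Matrix (Fin r) (Fin n) ℝ) : ℝ :=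
  (1 / 2) * (frobSq U + frobSq V)
    + (μ / 2) * ∑ ij ∈ Ω, ((U * V - M) ij.1 ij.2) ^ 2
    + (ν / 2) * ‖L (U * V) - b‖ ^ 2

/-!
The objective is continuous and, for nonnegative weights, dominates `(1/2)(‖U‖_F² + ‖V‖_F²)`, so
it is coercive and attains a global minimum; a global minimiser cannot be improved by changing a
single factor. The origin is a Nash equilibrium too, because `U * V` vanishes as soon as one factor
does, but it is in general not a minimiser.
-/

open Filter

section FrobeniusNorm

-- The norm topology unfolds to the product topology on matrices, so `cocompact` below is the
-- usual filter and the limits remain valid outside this section.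
attribute [local instance] Matrix.frobeniusNormedAddCommGroup Matrix.frobeniusNormedSpace

lemma frobSq_eq_norm_sq {a b : ℕ} (X : Matrix (Fin a) (Fin b) ℝ) : frobSq X = ‖X‖ ^ 2 := by
  have hnonneg : 0 ≤ ∑ i, ∑ j, X i j ^ 2 := by positivity
  rw [frobenius_norm_def, ← Real.sqrt_eq_rpow]
  simp only [Real.rpow_ofNat, Real.norm_eq_abs, sq_abs, Real.sq_sqrt hnonneg, frobSq]

lemma tendsto_frobSq_add_frobSq_cocompact_atTop (a b c d : ℕ) :
    Tendsto (fun P : Matrix (Fin a) (Fin b) ℝ × Matrix (Fin c) (Fin d) ℝ =>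
      frobSq P.1 + frobSq P.2) (cocompact _) atTop := by
  have norm_sq_le (P : Matrix (Fin a) (Fin b) ℝ × Matrix (Fin c) (Fin d) ℝ) :
      ‖P‖ ^ 2 ≤ frobSq P.1 + frobSq P.2 := by
    rw [frobSq_eq_norm_sq, frobSq_eq_norm_sq, Prod.norm_def]
    rcases max_choice ‖P.1‖ ‖P.2‖ with hmax | hmax <;> rw [hmax]
    · exact le_add_of_nonneg_right (sq_nonneg _)
    · exact le_add_of_nonneg_left (sq_nonneg _)
  exact tendsto_atTop_mono norm_sq_le
    ((tendsto_pow_atTop two_ne_zero).comp tendsto_norm_cocompact_atTop)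

end FrobeniusNorm

@[fun_prop]
lemma continuous_frobSq (a b : ℕ) : Continuous (frobSq : Matrix (Fin a) (Fin b) ℝ → ℝ) := by
  unfold frobSq
  fun_prop

section Objective

variable {m n r p : ℕ} (Ω : Finset (Fin m × Fin n)) (M : Matrix (Fin m) (Fin n) ℝ)
  (L : Matrix (Fin m) (Fin n) ℝ →ₗ[ℝ] EuclideanSpace ℝ (Fin p)) (b : EuclideanSpace ℝ (Fin p))

lemma continuous_objF (μ ν : ℝ) :
    Continuous fun P : Matrix (Fin m) (Fin r) ℝ × Matrix (Fin r) (Fin n) ℝ =>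
      objF Ω M L b μ ν P.1 P.2 := by
  have hL : Continuous L := L.continuous_of_finiteDimensional
  unfold objF
  fun_prop

variable {μ ν : ℝ}

lemma half_frobSq_add_frobSq_le_objF (hμ : 0 ≤ μ) (hν : 0 ≤ ν)
    (U : Matrix (Fin m) (Fin r) ℝ) (V : Matrix (Fin r) (Fin n) ℝ) :
    (1 / 2) * (frobSq U + frobSq V) ≤ objF Ω M L b μ ν U V := by
  have hdata : 0 ≤ (μ / 2) * ∑ ij ∈ Ω, ((U * V - M) ij.1 ij.2) ^ 2 := by positivity
  have hmodel : 0 ≤ (ν / 2) * ‖L (U * V) - b‖ ^ 2 := by positivity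
  unfold objF
  linarith

lemma tendsto_objF_cocompact_atTop (hμ : 0 ≤ μ) (hν : 0 ≤ ν) :
    Tendsto (fun P : Matrix (Fin m) (Fin r) ℝ × Matrix (Fin r) (Fin n) ℝ =>
      objF Ω M L b μ ν P.1 P.2) (cocompact _) atTop :=
  tendsto_atTop_mono (fun P => half_frobSq_add_frobSq_le_objF Ω M L b hμ hν P.1 P.2)
    ((tendsto_frobSq_add_frobSq_cocompact_atTop m r r n).const_mul_atTop one_half_pos)

theorem exists_forall_objF_le (hμ : 0 ≤ μ) (hν : 0 ≤ ν) :
    ∃ (U₀ : Matrix (Fin m) (Fin r) ℝ) (V₀ : Matrix (Fin r) (Fin n) ℝ),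
      ∀ (U : Matrix (Fin m) (Fin r) ℝ) (V : Matrix (Fin r) (Fin n) ℝ),
        objF Ω M L b μ ν U₀ V₀ ≤ objF Ω M L b μ ν U V := by
  obtain ⟨⟨U₀, V₀⟩, hmin⟩ := (continuous_objF Ω M L b μ ν).exists_forall_le
    (tendsto_objF_cocompact_atTop Ω M L b hμ hν)
  exact ⟨U₀, V₀, fun U V => hmin (U, V)⟩

end Objective

/-- The objective has a Nash equilibrium. -/
theorem objF_exists_nash {m n r p : ℕ} (Ω : Finset (Fin m × Fin n)) (M : Matrix (Fin m) (Fin n) ℝ)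
    (L : Matrix (Fin m) (Fin n) ℝ →ₗ[ℝ] EuclideanSpace ℝ (Fin p))
    (b : EuclideanSpace ℝ (Fin p)) (μ ν : ℝ) (hμ : 0 < μ) (hν : 0 < ν) :
    ∃ (U₀ : Matrix (Fin m) (Fin r) ℝ) (V₀ : Matrix (Fin r) (Fin n) ℝ),
      (∀ U : Matrix (Fin m) (Fin r) ℝ, objF Ω M L b μ ν U₀ V₀ ≤ objF Ω M L b μ ν U V₀) ∧
        (∀ V : Matrix (Fin r) (Fin n) ℝ, objF Ω M L b μ ν U₀ V₀ ≤ objF Ω M L b μ ν U₀ V) := by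
  obtain ⟨U₀, V₀, hmin⟩ := exists_forall_objF_le (r := r) Ω M L b hμ.le hν.le
  exact ⟨U₀, V₀, fun U => hmin U V₀, fun V => hmin U₀ V⟩
end

section
/- Sufficient decrease of the alternating minimization iterates: if (U^{(k)})_{k≥0} and (V^{(k)})_{k≥0} are alternating-minimization iterates for f, then for every k ≥ 0, f(U^{(k+1)}, V^{(k+1)}) + (1/2)·(‖U^{(k+1)} − U^{(k)}‖_F² + ‖V^{(k+1)} − V^{(k)}‖_F²) ≤ f(U^{(k)}, V^{(k)}); in particular the sequence k ↦ f(U^{(k)}, V^{(k)}) is nonincreasing. -/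
open Finset Matrix

/-!
If `x` minimizes a uniformly convex `f` with modulus `φ`, then comparing `x` with `a • x + b • y`,
where `a + b = 1` and `b > 0`, gives `f x + a * φ ‖x - y‖ ≤ f y`, and letting `a → 1` gives
`f x + φ ‖x - y‖ ≤ f y`. The data misfit is a convex function of the product `U * V`, which is
linear in each factor, so the Frobenius regularization makes the objective `1`-strongly convex in
`U` and in `V` separately, and the decreases of the two half-steps add up.
-/

lemma add_modulus_le_of_isMinOn {E : Type*} [NormedAddCommGroup E] [NormedSpace ℝ E] {s : Set E}
    {φ : ℝ → ℝ} {f : E → ℝ} {x y : E} (hf : UniformConvexOn s φ f) (hmin : IsMinOn f s x)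
    (hx : x ∈ s) (hy : y ∈ s) : f x + φ ‖x - y‖ ≤ f y := by
  have hsegment : ∀ a ∈ Set.Ico (0 : ℝ) 1, f x + a * φ ‖x - y‖ ≤ f y := by
    rintro a ⟨ha₀, ha₁⟩
    have hb : 0 < 1 - a := sub_pos.mpr ha₁
    have hab : a + (1 - a) = 1 := add_sub_cancel a 1
    have hle : f x ≤ a * f x + (1 - a) * f y - a * (1 - a) * φ ‖x - y‖ :=
      (hmin (hf.1 hx hy ha₀ hb.le hab)).trans (hf.2 hx hy ha₀ hb.le hab)
    have hmul : (1 - a) * (f x + a * φ ‖x - y‖) ≤ (1 - a) * f y := by linarith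
    exact le_of_mul_le_mul_left hmul hb
  have hone : (1 : ℝ) ∈ closure (Set.Ico 0 1) := by
    simp [closure_Ico zero_ne_one]
  have hcont : Continuous fun a : ℝ ↦ f x + a * φ ‖x - y‖ := by fun_prop
  simpa only [one_mul] using
    hcont.continuousWithinAt.closure_le hone continuousWithinAt_const hsegment

lemma uniformConvexOn_add_convexOn {E : Type*} [NormedAddCommGroup E] [NormedSpace ℝ E]
    {s : Set E} {φ : ℝ → ℝ} {f g : E → ℝ} (hf : UniformConvexOn s φ f) (hg : ConvexOn ℝ s g) :
    UniformConvexOn s φ (f + g) := by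
  simpa only [add_zero] using hf.add hg.uniformConvexOn_zero

/-- The iterates of alternating minimization of `f`: starting from any `(u 0, v 0)`, each step
first minimizes `f` exactly in the first variable and then in the second one, at the first
variable just updated. -/
structure IsAlternatingMinimization {α β γ : Type*} [LE γ] (f : α → β → γ) (u : ℕ → α)
    (v : ℕ → β) : Prop where
  le_left : ∀ k a, f (u (k + 1)) (v k) ≤ f a (v k)
  le_right : ∀ k b, f (u (k + 1)) (v (k + 1)) ≤ f (u (k + 1)) b

namespace IsAlternatingMinimization

lemma antitone {α β γ : Type*} [Preorder γ] {f : α → β → γ} {u : ℕ → α} {v : ℕ → β}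
    (h : IsAlternatingMinimization f u v) : Antitone fun k ↦ f (u k) (v k) :=
  antitone_nat_of_succ_le fun k ↦ (h.le_right k (v k)).trans (h.le_left k (u k))

theorem sufficient_decrease {E F : Type*} [NormedAddCommGroup E] [NormedSpace ℝ E]
    [NormedAddCommGroup F] [NormedSpace ℝ F] {f : E → F → ℝ} {u : ℕ → E} {v : ℕ → F}
    {φ ψ : ℝ → ℝ} (h : IsAlternatingMinimization f u v)
    (hleft : ∀ y, UniformConvexOn Set.univ φ fun x ↦ f x y)
    (hright : ∀ x, UniformConvexOn Set.univ ψ (f x)) (k : ℕ) :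
    f (u (k + 1)) (v (k + 1)) + (φ ‖u (k + 1) - u k‖ + ψ ‖v (k + 1) - v k‖) ≤ f (u k) (v k) := by
  have hu : f (u (k + 1)) (v k) + φ ‖u (k + 1) - u k‖ ≤ f (u k) (v k) :=
    add_modulus_le_of_isMinOn (hleft (v k)) (isMinOn_univ_iff.mpr (h.le_left k))
      (Set.mem_univ _) (Set.mem_univ _)
  have hv : f (u (k + 1)) (v (k + 1)) + ψ ‖v (k + 1) - v k‖ ≤ f (u (k + 1)) (v k) :=
    add_modulus_le_of_isMinOn (hright (u (k + 1))) (isMinOn_univ_iff.mpr (h.le_right k))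
      (Set.mem_univ _) (Set.mem_univ _)
  linarith

end IsAlternatingMinimization

lemma convexOn_finset_sum {𝕜 E β ι : Type*} [Semiring 𝕜] [PartialOrder 𝕜] [AddCommMonoid E]
    [SMul 𝕜 E] [AddCommMonoid β] [PartialOrder β] [IsOrderedAddMonoid β] [Module 𝕜 β] {s : Set E}
    (hs : Convex 𝕜 s) (t : Finset ι) {f : ι → E → β} (hf : ∀ i ∈ t, ConvexOn 𝕜 s (f i)) :
    ConvexOn 𝕜 s fun x ↦ ∑ i ∈ t, f i x := by
  simpa only [Finset.sum_fn] using
    Finset.sum_induction f (ConvexOn 𝕜 s) (fun _ _ ↦ ConvexOn.add) (convexOn_const 0 hs) hf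

lemma convexOn_norm_linearMap_sub_sq {E F : Type*} [AddCommGroup E] [Module ℝ E]
    [SeminormedAddCommGroup F] [NormedSpace ℝ F] (T : E →ₗ[ℝ] F) (b : F) :
    ConvexOn ℝ Set.univ fun x ↦ ‖T x - b‖ ^ 2 := by
  have hdist : ConvexOn ℝ Set.univ fun x ↦ ‖T x - b‖ := by
    simpa [Function.comp_def, dist_eq_norm] using (convexOn_univ_dist b).comp_linearMap T
  exact hdist.pow (fun _ _ ↦ norm_nonneg _) 2

section Frobenius

open scoped Matrix.Norms.Frobenius

lemma frobenius_norm_sq_eq_frobSq {a b : ℕ} (X : Matrix (Fin a) (Fin b) ℝ) :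
    ‖X‖ ^ 2 = frobSq X := by
  have hsum : 0 ≤ ∑ i, ∑ j, X i j ^ 2 := by positivity
  simp only [Matrix.frobenius_norm_def, Real.norm_eq_abs, Real.rpow_two, sq_abs,
    ← Real.sqrt_eq_rpow, Real.sq_sqrt hsum, frobSq]

lemma strongConvexOn_half_frobSq {a b : ℕ} :
    StrongConvexOn Set.univ 1 fun X : Matrix (Fin a) (Fin b) ℝ ↦ (1 / 2) * frobSq X := by
  refine ⟨convex_univ, fun X _ Y _ s t _ _ hst ↦ le_of_eq ?_⟩
  obtain rfl := eq_sub_of_add_eq hst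
  simp only [frobenius_norm_sq_eq_frobSq, frobSq, smul_eq_mul, Finset.mul_sum,
    ← Finset.sum_add_distrib, ← Finset.sum_sub_distrib]
  refine Finset.sum_congr rfl fun i _ ↦ Finset.sum_congr rfl fun j _ ↦ ?_
  simp only [Matrix.add_apply, Matrix.smul_apply, Matrix.sub_apply, smul_eq_mul]
  ring

end Frobenius

section Objective

variable {m n r p : ℕ} (Ω : Finset (Fin m × Fin n)) (M : Matrix (Fin m) (Fin n) ℝ)
  (L : Matrix (Fin m) (Fin n) ℝ →ₗ[ℝ] EuclideanSpace ℝ (Fin p)) (b : EuclideanSpace ℝ (Fin p))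
  {μ ν : ℝ}

/-- The unregularized part of the objective `objF`, as a function of the completed matrix
`X = UV`: the weighted squared errors in the observed entries and in the linear model. -/
noncomputable def dataMisfit (μ ν : ℝ) (X : Matrix (Fin m) (Fin n) ℝ) : ℝ :=
  (μ / 2) * ∑ ij ∈ Ω, ((X - M) ij.1 ij.2) ^ 2 + (ν / 2) * ‖L X - b‖ ^ 2

lemma objF_eq_add_dataMisfit (μ ν : ℝ) (U : Matrix (Fin m) (Fin r) ℝ)
    (V : Matrix (Fin r) (Fin n) ℝ) :
    objF Ω M L b μ ν U V =
      (1 / 2) * frobSq U + (1 / 2) * frobSq V + dataMisfit Ω M L b μ ν (U * V) := by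
  simp only [objF, dataMisfit]
  ring

lemma convexOn_dataMisfit (hμ : 0 ≤ μ) (hν : 0 ≤ ν) :
    ConvexOn ℝ Set.univ (dataMisfit Ω M L b μ ν) := by
  have hentry (ij : Fin m × Fin n) :
      ConvexOn ℝ Set.univ fun X : Matrix (Fin m) (Fin n) ℝ ↦ ((X - M) ij.1 ij.2) ^ 2 := by
    simpa using convexOn_norm_linearMap_sub_sq (Matrix.entryLinearMap ℝ ℝ ij.1 ij.2) (M ij.1 ij.2)
  have hentries := convexOn_finset_sum convex_univ Ω fun ij _ ↦ hentry ij
  exact (hentries.smul (by positivity)).add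
    ((convexOn_norm_linearMap_sub_sq L b).smul (by positivity))

open scoped Matrix.Norms.Frobenius

lemma strongConvexOn_objF_left (hμ : 0 ≤ μ) (hν : 0 ≤ ν) (V : Matrix (Fin r) (Fin n) ℝ) :
    StrongConvexOn Set.univ 1 fun U ↦ objF Ω M L b μ ν U V := by
  have hmisfit : ConvexOn ℝ Set.univ fun U : Matrix (Fin m) (Fin r) ℝ ↦
      dataMisfit Ω M L b μ ν (U * V) :=
    (convexOn_dataMisfit Ω M L b hμ hν).comp_linearMap (mulRightLinearMap (Fin m) ℝ V)
  simpa only [StrongConvexOn, objF_eq_add_dataMisfit, add_assoc, Pi.add_def] using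
    uniformConvexOn_add_convexOn strongConvexOn_half_frobSq
      ((convexOn_const ((1 / 2) * frobSq V) convex_univ).add hmisfit)

lemma strongConvexOn_objF_right (hμ : 0 ≤ μ) (hν : 0 ≤ ν) (U : Matrix (Fin m) (Fin r) ℝ) :
    StrongConvexOn Set.univ 1 fun V ↦ objF Ω M L b μ ν U V := by
  have hmisfit : ConvexOn ℝ Set.univ fun V : Matrix (Fin r) (Fin n) ℝ ↦
      dataMisfit Ω M L b μ ν (U * V) :=
    (convexOn_dataMisfit Ω M L b hμ hν).comp_linearMap (mulLeftLinearMap (Fin n) ℝ U)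
  simpa only [StrongConvexOn, objF_eq_add_dataMisfit, add_assoc, Pi.add_def,
    add_left_comm ((1 / 2) * frobSq U)] using
    uniformConvexOn_add_convexOn strongConvexOn_half_frobSq
      ((convexOn_const ((1 / 2) * frobSq U) convex_univ).add hmisfit)

end Objective

/-- Sufficient decrease of the alternating-minimization iterates; in particular the
objective values are nonincreasing. -/
theorem objF_sufficient_decrease {m n r p : ℕ} (Ω : Finset (Fin m × Fin n)) (M : Matrix (Fin m) (Fin n) ℝ)
    (L : Matrix (Fin m) (Fin n) ℝ →ₗ[ℝ] EuclideanSpace ℝ (Fin p))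
    (b : EuclideanSpace ℝ (Fin p)) (μ ν : ℝ) (hμ : 0 < μ) (hν : 0 < ν)
    (U : ℕ → Matrix (Fin m) (Fin r) ℝ) (V : ℕ → Matrix (Fin r) (Fin n) ℝ)
    (hUstep : ∀ (k : ℕ) (U' : Matrix (Fin m) (Fin r) ℝ),
      objF Ω M L b μ ν (U (k + 1)) (V k) ≤ objF Ω M L b μ ν U' (V k))
    (hVstep : ∀ (k : ℕ) (V' : Matrix (Fin r) (Fin n) ℝ),
      objF Ω M L b μ ν (U (k + 1)) (V (k + 1)) ≤ objF Ω M L b μ ν (U (k + 1)) V') :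
    (∀ k : ℕ,
        objF Ω M L b μ ν (U (k + 1)) (V (k + 1))
          + (1 / 2) * (frobSq (U (k + 1) - U k) + frobSq (V (k + 1) - V k))
          ≤ objF Ω M L b μ ν (U k) (V k)) ∧
      Antitone (fun k : ℕ => objF Ω M L b μ ν (U k) (V k)) := by
  have hUV : IsAlternatingMinimization (objF Ω M L b μ ν) U V := ⟨hUstep, hVstep⟩
  refine ⟨fun k ↦ ?_, hUV.antitone⟩
  open scoped Matrix.Norms.Frobenius in
  simpa only [frobenius_norm_sq_eq_frobSq, ← mul_add] using
    hUV.sufficient_decrease (strongConvexOn_objF_left Ω M L b hμ.le hν.le)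
      (strongConvexOn_objF_right Ω M L b hμ.le hν.le) k
end
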